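/- arXiv:2509.13222 — 4 statements merged into one kernel-verified Lean document; each statement's English description precedes it below -/
import Mathlib

section
/- Let (X,d) be a metric space, let g : X → [0,∞], and for each ε > 0 let f_ε : X → [0,∞]. Let a ∈ X and let (x_n)_{n≥1} be a sequence in X such that x_n → a and limsup_{n→∞} g(x_n) ≤ g(a). Suppose that for each n there exists a family (y_{n,ε})_{ε>0} in X such that y_{n,ε} → x_n as ε → 0⁺ and limsup_{ε→0⁺} f_ε(y_{n,ε}) ≤ g(x_n). Then there exists a family (z_ε)_{ε>0} in X such that z_ε → a as ε → 0⁺ and limsup_{ε→0⁺} f_ε(z_ε) ≤ g(a). -/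
open Filter Topology

/-!
For `k : ℕ` call `w` *`k`-good at `ε`* if `edist w a < 1/k` and `f ε w ≤ g a + 1/k`.
Picking `n` with `x n` close to `a` and `g (x n)` not much above `g a`, the recovery family `y n`
shows that for each fixed `k` a `k`-good point exists for all small `ε > 0`. The diagonal family
takes `z ε` to be `k`-good for the largest possible `k ≤ ⌊1/ε⌋`. Since `k`-goodness gets stronger
as `k` grows and the bound `⌊1/ε⌋` tends to infinity, `z ε` is eventually `k`-good for every `k`,
which is both conclusions.
-/

/-- Diagonal lemma: given a sequence `x n → a` with `limsup g (x n) ≤ g a`, and for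
each `n` a recovery family `y n ε → x n` with `limsup_{ε→0⁺} f ε (y n ε) ≤ g (x n)`,
there is a family `z ε → a` with `limsup_{ε→0⁺} f ε (z ε) ≤ g a`. -/
theorem stmt0 {X : Type*} [MetricSpace X]
    (g : X → ENNReal) (f : ℝ → X → ENNReal) (a : X) (x : ℕ → X)
    (hx : Tendsto x atTop (𝓝 a))
    (hgx : Filter.limsup (fun n => g (x n)) atTop ≤ g a)
    (y : ℕ → ℝ → X)
    (hy : ∀ n, Tendsto (y n) (𝓝[>] (0:ℝ)) (𝓝 (x n)))
    (hfy : ∀ n, Filter.limsup (fun ε => f ε (y n ε)) (𝓝[>] (0:ℝ)) ≤ g (x n)) :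
    ∃ z : ℝ → X, Tendsto z (𝓝[>] (0:ℝ)) (𝓝 a) ∧
      Filter.limsup (fun ε => f ε (z ε)) (𝓝[>] (0:ℝ)) ≤ g a := by
  classical
  -- `(0 : ENNReal)⁻¹ = ⊤`, so `a` itself is always `0`-good.
  let P : ℕ → ℝ → X → Prop := fun k ε w =>
    edist w a < (k : ENNReal)⁻¹ ∧ f ε w ≤ g a + (k : ENNReal)⁻¹
  have hmono : ∀ {j k : ℕ} {ε : ℝ} {w : X}, j ≤ k → P k ε w → P j ε w := by
    intro j k ε w hjk h
    have hle : (k : ENNReal)⁻¹ ≤ (j : ENNReal)⁻¹ :=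
      ENNReal.inv_le_inv.2 (by exact_mod_cast hjk)
    exact ⟨h.1.trans_le hle, h.2.trans (by gcongr)⟩
  have hex : ∀ k : ℕ, ∀ᶠ ε in 𝓝[>] (0 : ℝ), ∃ w, P k ε w := by
    intro k
    have hpos : (0 : ENNReal) < (k : ENNReal)⁻¹ :=
      ENNReal.inv_pos.2 (ENNReal.natCast_ne_top k)
    have hxk : ∀ᶠ n in atTop, edist (x n) a < (k : ENNReal)⁻¹ :=
      hx (Metric.eball_mem_nhds a hpos)
    by_cases htop : g a = ⊤
    · obtain ⟨n, hn⟩ := hxk.exists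
      have hyn : ∀ᶠ ε in 𝓝[>] (0 : ℝ), y n ε ∈ Metric.eball a (k : ENNReal)⁻¹ :=
        hy n (Metric.isOpen_eball.mem_nhds hn)
      filter_upwards [hyn] with ε hε
      exact ⟨y n ε, hε, by simp [htop]⟩
    · have hlt : g a < g a + (k : ENNReal)⁻¹ := ENNReal.lt_add_right htop hpos.ne'
      obtain ⟨n, hn, hgn⟩ :=
        (hxk.and (eventually_lt_of_limsup_lt (hgx.trans_lt hlt))).exists
      have hyn : ∀ᶠ ε in 𝓝[>] (0 : ℝ), y n ε ∈ Metric.eball a (k : ENNReal)⁻¹ :=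
        hy n (Metric.isOpen_eball.mem_nhds hn)
      filter_upwards [hyn, eventually_lt_of_limsup_lt ((hfy n).trans_lt hgn)] with ε hε hfε
      exact ⟨y n ε, hε, hfε.le⟩
  let K : ℝ → ℕ := fun ε => Nat.findGreatest (fun k => ∃ w, P k ε w) ⌊ε⁻¹⌋₊
  have hK : ∀ ε, ∃ w, P (K ε) ε w := fun ε =>
    Nat.findGreatest_spec (P := fun k => ∃ w, P k ε w) (Nat.zero_le _) ⟨a, by simp, by simp⟩
  choose z hz using hK
  have hgood : ∀ k : ℕ, ∀ᶠ ε in 𝓝[>] (0 : ℝ), P k ε (z ε) := by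
    intro k
    have hfloor : ∀ᶠ ε in 𝓝[>] (0 : ℝ), k ≤ ⌊ε⁻¹⌋₊ :=
      (tendsto_nat_floor_atTop.comp tendsto_inv_nhdsGT_zero).eventually_ge_atTop k
    filter_upwards [hex k, hfloor] with ε hε hkε
    exact hmono (Nat.le_findGreatest hkε hε) (hz ε)
  refine ⟨z, ?_, ?_⟩
  · rw [EMetric.tendsto_nhds]
    intro r hr
    obtain ⟨k, hk⟩ := ENNReal.exists_inv_nat_lt hr.ne'
    filter_upwards [hgood k] with ε hε
    exact hε.1.trans hk
  · have hlim : Tendsto (fun k : ℕ => g a + (k : ENNReal)⁻¹) atTop (𝓝 (g a)) := by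
      simpa using ENNReal.tendsto_inv_nat_nhds_zero.const_add (g a)
    exact ge_of_tendsto' hlim fun k =>
      limsup_le_of_le (h := (hgood k).mono fun _ h => h.2)
end

section
/- Let A be a positive-definite symmetric real d×d matrix, let B be a positive-semidefinite symmetric real d×d matrix, let g : ℝ^d → ℝ be continuous, and let δ : (0,∞) → (0,1] satisfy √ε / δ(ε) → 0 as ε → 0⁺. Then lim_{ε→0⁺} ε^{-1}(2πε)^{-d/2} ∫_{B_{δ(ε)}} e^{-(x·Ax)/(2ε)} · g(x/δ(ε)) · (x·Bx) dx = g(0)·Tr(B A^{-1}) / √(det A). -/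
open Filter Topology MeasureTheory

/-!
Substituting `x = √ε • y` absorbs the prefactor `ε⁻¹ (2πε)^(-d/2)`: the expression becomes
`(2π)^(-d/2) ∫ G ((√ε / δ ε) • y) exp (-(y·Ay) / 2) (y·By) dy`, where `G` is `g` cut off to the
closed unit ball. Since `G` is bounded and continuous at `0`, and `√ε / δ ε → 0`, dominated
convergence reduces the claim to the exact Gaussian moment
`∫ exp (-(y·Ay) / 2) (y·By) dy = (2π)^(d/2) Tr(B A⁻¹) / √(det A)` (`gauss_quad`).

For that moment, write `A = Sᵀ S` and substitute `z = S y`. The integrand becomes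
`exp (-|z|² / 2) (z·Cz)` with `C = S⁻ᵀ B S⁻¹`, whose trace is `Tr(B A⁻¹)`, and the Jacobian is
`|det S|⁻¹ = 1 / √(det A)`. The standard case (`std_quad`) follows by Fubini from the
one-dimensional moments of order `0`, `1` and `2`.
-/

lemma gauss_moment_integrable (n : ℕ) :
    Integrable (fun t : ℝ => Real.exp (-t ^ 2 / 2) * t ^ n) := by
  have h := integrable_rpow_mul_exp_neg_mul_sq (b := 1 / 2) (by norm_num) (s := n)
    (by have := n.cast_nonneg (α := ℝ); linarith)
  refine h.congr (ae_of_all _ fun t => ?_)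
  simp only [Real.rpow_natCast]
  rw [mul_comm]; congr 2; ring

lemma gauss_integral_eq (f : ℝ → ℝ) :
    ∫ t : ℝ, Real.exp (-t ^ 2 / 2) * f t =
      √(2 * Real.pi) * ∫ t, f t ∂(ProbabilityTheory.gaussianReal 0 1) := by
  rw [ProbabilityTheory.integral_gaussianReal_eq_integral_smul (by norm_num), ← integral_const_mul]
  congr 1 with t
  have : √(2 * Real.pi) ≠ 0 := by positivity
  simp only [ProbabilityTheory.gaussianPDFReal, smul_eq_mul, NNReal.coe_one, sub_zero, mul_one]
  field_simp

lemma gauss_moment_zero : ∫ t : ℝ, Real.exp (-t ^ 2 / 2) = √(2 * Real.pi) := by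
  simpa using gauss_integral_eq (fun _ => 1)

lemma gauss_moment_one : ∫ t : ℝ, Real.exp (-t ^ 2 / 2) * t = 0 := by
  simpa using gauss_integral_eq (fun t => t)

lemma gauss_moment_two : ∫ t : ℝ, Real.exp (-t ^ 2 / 2) * t ^ 2 = √(2 * Real.pi) := by
  rw [gauss_integral_eq (fun t => t ^ 2)]
  have h := ProbabilityTheory.variance_fun_id_gaussianReal (μ := 0) (v := 1)
  rw [ProbabilityTheory.variance_of_integral_eq_zero (by fun_prop) (by simp)] at h
  rw [h]; simp

/-- The weighted monomial `z i * z j` as a product of functions of single coordinates, ready for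
Fubini. The exponent of coordinate `k` is the number of times `k` occurs among `i` and `j`. -/
lemma prod_form {ι : Type*} [Fintype ι] [DecidableEq ι] (i j : ι) (z : ι → ℝ) :
    Real.exp (-(∑ k, z k ^ 2) / 2) * (z i * z j) =
      ∏ k, Real.exp (-z k ^ 2 / 2) *
        z k ^ ((if k = i then 1 else 0) + (if k = j then 1 else 0) : ℕ) := by
  rw [Finset.prod_mul_distrib, ← Real.exp_sum]
  simp only [pow_add, Finset.prod_mul_distrib, pow_ite, pow_one, pow_zero,
    Finset.prod_ite_eq', Finset.mem_univ, if_true]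
  congr 2
  rw [← Finset.sum_div, Finset.sum_neg_distrib]

lemma gauss_pi_integrable {ι : Type*} [Fintype ι] [DecidableEq ι] (i j : ι) :
    Integrable (fun z : ι → ℝ => Real.exp (-(∑ k, z k ^ 2) / 2) * (z i * z j)) := by
  simp_rw [prod_form]
  exact Integrable.fintype_prod (f := fun k (t : ℝ) => Real.exp (-t ^ 2 / 2) *
        t ^ ((if k = i then 1 else 0) + (if k = j then 1 else 0) : ℕ))
    (fun k => gauss_moment_integrable _)

lemma gauss_pi_integral {ι : Type*} [Fintype ι] [DecidableEq ι] (i j : ι) :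
    ∫ z : ι → ℝ, Real.exp (-(∑ k, z k ^ 2) / 2) * (z i * z j) =
      if i = j then √(2 * Real.pi) ^ Fintype.card ι else 0 := by
  simp_rw [prod_form]
  rw [integral_fintype_prod_volume_eq_prod (f := fun k (t : ℝ) => Real.exp (-t ^ 2 / 2) *
        t ^ ((if k = i then 1 else 0) + (if k = j then 1 else 0) : ℕ))]
  split_ifs with h
  · subst h
    rw [Finset.prod_eq_pow_card (b := √(2 * Real.pi))]
    · simp
    intro k _
    by_cases hk : k = i
    · simpa [hk] using gauss_moment_two
    · simpa [hk] using gauss_moment_zero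
  · apply Finset.prod_eq_zero (Finset.mem_univ i)
    simpa [h] using gauss_moment_one

lemma std_quad {d : ℕ} (C : Matrix (Fin d) (Fin d) ℝ) :
    Integrable (fun z : Fin d → ℝ =>
      Real.exp (-(∑ k, z k ^ 2) / 2) * ∑ i, ∑ j, z i * C i j * z j) ∧
    ∫ z : Fin d → ℝ, Real.exp (-(∑ k, z k ^ 2) / 2) * ∑ i, ∑ j, z i * C i j * z j =
      √(2 * Real.pi) ^ d * C.trace := by
  have e : (fun z : Fin d → ℝ =>
      Real.exp (-(∑ k, z k ^ 2) / 2) * ∑ i, ∑ j, z i * C i j * z j) = fun z =>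
      ∑ i, ∑ j, C i j * (Real.exp (-(∑ k, z k ^ 2) / 2) * (z i * z j)) := by
    ext z
    simp_rw [Finset.mul_sum]
    refine Finset.sum_congr rfl fun i _ => Finset.sum_congr rfl fun j _ => by ring
  rw [e]
  have hi := fun i j : Fin d => (gauss_pi_integrable i j).const_mul (C i j)
  refine ⟨integrable_finsetSum _ fun i _ => integrable_finsetSum _ fun j _ => hi i j, ?_⟩
  rw [integral_finsetSum _ fun i _ => integrable_finsetSum _ fun j _ => hi i j]
  simp_rw [integral_finsetSum _ fun j _ => hi _ j, integral_const_mul, gauss_pi_integral]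
  simp [Matrix.trace, Finset.mul_sum, mul_comm]

open scoped MatrixOrder in
lemma exists_factor {d : ℕ} {A : Matrix (Fin d) (Fin d) ℝ} (hA : A.PosDef) :
    ∃ S : Matrix (Fin d) (Fin d) ℝ, A = S.transpose * S := by
  obtain ⟨S, hS⟩ := CStarAlgebra.nonneg_iff_eq_star_mul_self.mp hA.posSemidef.nonneg
  exact ⟨S, by rw [hS, Matrix.star_eq_conjTranspose, Matrix.conjTranspose_eq_transpose_of_trivial]⟩

lemma quad_eq {d : ℕ} (M : Matrix (Fin d) (Fin d) ℝ) (y : Fin d → ℝ) :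
    ∑ i, ∑ j, y i * M i j * y j = dotProduct y (M.mulVec y) := by
  simp [dotProduct, Matrix.mulVec, Finset.mul_sum, mul_assoc]

/-- The second moment of the centred Gaussian with precision matrix `A`, on `Fin d → ℝ`; obtained
from `std_quad` by the substitution `z = S y`, where `A = Sᵀ S`. -/
lemma gauss_quad {d : ℕ} {A : Matrix (Fin d) (Fin d) ℝ} (hA : A.PosDef)
    (B : Matrix (Fin d) (Fin d) ℝ) :
    Integrable (fun y : Fin d → ℝ =>
      Real.exp (-(∑ i, ∑ j, y i * A i j * y j) / 2) * ∑ i, ∑ j, y i * B i j * y j) ∧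
    ∫ y : Fin d → ℝ,
      Real.exp (-(∑ i, ∑ j, y i * A i j * y j) / 2) * ∑ i, ∑ j, y i * B i j * y j =
      √(2 * Real.pi) ^ d * (Matrix.trace (B * A⁻¹) / √A.det) := by
  obtain ⟨S, hS⟩ := exists_factor hA
  have hdet : A.det = S.det ^ 2 := by rw [hS, Matrix.det_mul, Matrix.det_transpose, sq]
  have hS0 : S.det ≠ 0 := fun h => hA.det_pos.ne' (by rw [hdet, h]; norm_num)
  have hu : IsUnit S.det := hS0.isUnit
  set C := S⁻¹.transpose * B * S⁻¹ with hC
  obtain ⟨h1, h2⟩ := std_quad C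
  have htr : C.trace = Matrix.trace (B * A⁻¹) := by
    rw [hC, hS, Matrix.mul_inv_rev, mul_assoc, Matrix.trace_mul_comm, mul_assoc,
      Matrix.transpose_nonsing_inv]
  have e : (fun y : Fin d → ℝ =>
      Real.exp (-(∑ i, ∑ j, y i * A i j * y j) / 2) * ∑ i, ∑ j, y i * B i j * y j) =
      (fun z : Fin d → ℝ =>
        Real.exp (-(∑ k, z k ^ 2) / 2) * ∑ i, ∑ j, z i * C i j * z j) ∘ Matrix.toLin' S := by
    ext y
    have q1 : ∑ k, (S.mulVec y) k ^ 2 = ∑ i, ∑ j, y i * A i j * y j := by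
      rw [quad_eq, hS, ← Matrix.mulVec_mulVec, Matrix.mulVec_transpose, dotProduct_comm,
        ← Matrix.dotProduct_mulVec]
      simp [dotProduct, sq]
    have q2 : ∑ i, ∑ j, (S.mulVec y) i * C i j * (S.mulVec y) j =
        ∑ i, ∑ j, y i * B i j * y j := by
      rw [quad_eq, quad_eq, Matrix.mulVec_mulVec, hC, mul_assoc _ S⁻¹,
        Matrix.nonsing_inv_mul _ hu, mul_one, ← Matrix.mulVec_mulVec, Matrix.mulVec_transpose,
        dotProduct_comm, ← Matrix.dotProduct_mulVec, Matrix.mulVec_mulVec,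
        Matrix.nonsing_inv_mul _ hu, Matrix.one_mulVec, dotProduct_comm]
    simp only [Function.comp, Matrix.toLin'_apply, q1, q2]
  have hm : Measurable (Matrix.toLin' S) :=
    (LinearMap.continuous_of_finiteDimensional _).measurable
  have hmap := Real.map_matrix_volume_pi_eq_smul_volume_pi hS0
  have hf : Continuous (fun z : Fin d → ℝ =>
        Real.exp (-(∑ k, z k ^ 2) / 2) * ∑ i, ∑ j, z i * C i j * z j) := by fun_prop
  rw [e]
  constructor
  · rw [← integrable_map_measure hf.aestronglyMeasurable hm.aemeasurable, hmap]
    exact h1.smul_measure ENNReal.ofReal_ne_top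
  · refine (integral_map hm.aemeasurable hf.aestronglyMeasurable).symm.trans ?_
    rw [hmap, integral_smul_measure, h2,
      htr, hdet, Real.sqrt_sq_eq_abs, ENNReal.toReal_ofReal (abs_nonneg _), abs_inv, smul_eq_mul]
    ring

lemma gauss_quad_euclidean {d : ℕ} {A : Matrix (Fin d) (Fin d) ℝ} (hA : A.PosDef)
    (B : Matrix (Fin d) (Fin d) ℝ) :
    Integrable (fun y : EuclideanSpace ℝ (Fin d) =>
      Real.exp (-(∑ i, ∑ j, y i * A i j * y j) / 2) * ∑ i, ∑ j, y i * B i j * y j) ∧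
    ∫ y : EuclideanSpace ℝ (Fin d),
      Real.exp (-(∑ i, ∑ j, y i * A i j * y j) / 2) * ∑ i, ∑ j, y i * B i j * y j =
      √(2 * Real.pi) ^ d * (Matrix.trace (B * A⁻¹) / √A.det) := by
  have hp := EuclideanSpace.volume_preserving_symm_measurableEquiv_toLp (Fin d)
  obtain ⟨h1, h2⟩ := gauss_quad hA B
  refine ⟨?_, ?_⟩
  · exact (hp.integrable_comp_emb (MeasurableEquiv.measurableEmbedding _)).mpr h1
  · rw [← h2]
    exact hp.integral_comp (MeasurableEquiv.measurableEmbedding _) (fun y : Fin d → ℝ =>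
      Real.exp (-(∑ i, ∑ j, y i * A i j * y j) / 2) * ∑ i, ∑ j, y i * B i j * y j)

/-- Gaussian second-moment scaling lemma: for `A` positive definite, `B` positive
semidefinite, `g` continuous and `√ε/δ(ε) → 0` with `δ(ε) ∈ (0,1]`,
`ε⁻¹(2πε)^{-d/2} ∫_{B_{δ(ε)}} e^{-x·Ax/(2ε)} g(x/δ(ε)) (x·Bx) dx
  → g(0)·Tr(B A⁻¹)/√(det A)`. -/
theorem stmt3 {d : ℕ}
    (A B : Matrix (Fin d) (Fin d) ℝ) (hA : A.PosDef) (hB : B.PosSemidef)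
    (g : EuclideanSpace ℝ (Fin d) → ℝ) (hg : Continuous g)
    (δ : ℝ → ℝ) (hδ : ∀ ε : ℝ, 0 < ε → δ ε ∈ Set.Ioc (0:ℝ) 1)
    (hlim : Tendsto (fun ε => Real.sqrt ε / δ ε) (𝓝[>] (0:ℝ)) (𝓝 0)) :
    Tendsto (fun ε =>
        ε⁻¹ * (2 * Real.pi * ε) ^ (-(d : ℝ) / 2) *
          ∫ x in Metric.closedBall (0 : EuclideanSpace ℝ (Fin d)) (δ ε),
            Real.exp (-(∑ i, ∑ j, x i * A i j * x j) / (2 * ε)) *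
              g ((δ ε)⁻¹ • x) * (∑ i, ∑ j, x i * B i j * x j))
      (𝓝[>] (0:ℝ)) (𝓝 (g 0 * Matrix.trace (B * A⁻¹) / Real.sqrt A.det)) := by
  obtain ⟨hint, hval⟩ := gauss_quad_euclidean hA B
  set Φ : EuclideanSpace ℝ (Fin d) → ℝ := fun y =>
    Real.exp (-(∑ i, ∑ j, y i * A i j * y j) / 2) * ∑ i, ∑ j, y i * B i j * y j with hΦ
  -- Cutting `g` off to the unit ball encodes the domain `|x| ≤ δ ε` after rescaling and makes the
  -- integrands uniformly dominated.
  set G : EuclideanSpace ℝ (Fin d) → ℝ := (Metric.closedBall 0 1).indicator g with hG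
  have hGm : Measurable G := hg.measurable.indicator measurableSet_closedBall
  obtain ⟨M, hM⟩ := (isCompact_closedBall (0 : EuclideanSpace ℝ (Fin d)) 1).exists_bound_of_continuousOn
    hg.continuousOn
  have hM0 : 0 ≤ M := (norm_nonneg _).trans (hM 0 (by simp))
  have hGb : ∀ x, ‖G x‖ ≤ M := fun x => by
    by_cases hx : x ∈ Metric.closedBall (0 : EuclideanSpace ℝ (Fin d)) 1
    · simpa [hG, Set.indicator_of_mem hx] using hM x hx
    · simpa [hG, Set.indicator_of_notMem hx] using hM0
  have hGc : ContinuousAt G 0 :=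
    hg.continuousAt.congr (by
      filter_upwards [Metric.closedBall_mem_nhds (0 : EuclideanSpace ℝ (Fin d)) one_pos] with x hx
      simp [hG, Set.indicator_of_mem hx])
  have hG0 : G 0 = g 0 := by simp [hG]
  have key : Tendsto (fun ε => ∫ y, G ((√ε / δ ε) • y) * Φ y) (𝓝[>] (0:ℝ))
      (𝓝 (∫ y, g 0 * Φ y)) := by
    refine tendsto_integral_filter_of_dominated_convergence (fun y => M * ‖Φ y‖) ?_ ?_
      (hint.norm.const_mul M) ?_
    · exact Eventually.of_forall fun ε =>
        (hGm.comp (measurable_const_smul _)).aestronglyMeasurable.mul hint.1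
    · refine Eventually.of_forall fun ε => ae_of_all _ fun y => ?_
      rw [norm_mul]
      exact mul_le_mul_of_nonneg_right (hGb _) (norm_nonneg _)
    · refine ae_of_all _ fun y => Tendsto.mul_const _ ?_
      have : Tendsto (fun ε => (√ε / δ ε) • y) (𝓝[>] (0:ℝ)) (𝓝 0) := by
        simpa using hlim.smul_const y
      rw [← hG0]
      exact hGc.tendsto.comp this
  rw [integral_const_mul, hval] at key
  have hpi : (0:ℝ) < √(2 * Real.pi) ^ d := by positivity
  have key2 := key.const_mul (√(2 * Real.pi) ^ d)⁻¹
  have hl : (√(2 * Real.pi) ^ d)⁻¹ * (g 0 * (√(2 * Real.pi) ^ d *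
      (Matrix.trace (B * A⁻¹) / √A.det))) = g 0 * Matrix.trace (B * A⁻¹) / √A.det := by
    field_simp
  rw [hl] at key2
  refine key2.congr' ?_
  filter_upwards [self_mem_nhdsWithin] with ε hε
  have hε : 0 < ε := hε
  have hδ0 := (hδ ε hε).1
  have hs : 0 < √ε := Real.sqrt_pos.mpr hε
  have hs2 : √ε ^ 2 = ε := Real.sq_sqrt hε.le
  rw [← integral_indicator measurableSet_closedBall]
  have hc := Measure.integral_comp_smul_of_nonneg volume
    ((Metric.closedBall (0 : EuclideanSpace ℝ (Fin d)) (δ ε)).indicator fun x =>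
            Real.exp (-(∑ i, ∑ j, x i * A i j * x j) / (2 * ε)) *
              g ((δ ε)⁻¹ • x) * (∑ i, ∑ j, x i * B i j * x j)) (√ε) (hR := hs.le)
  have hpt : ∀ y : EuclideanSpace ℝ (Fin d),
      (Metric.closedBall (0 : EuclideanSpace ℝ (Fin d)) (δ ε)).indicator (fun x =>
            Real.exp (-(∑ i, ∑ j, x i * A i j * x j) / (2 * ε)) *
              g ((δ ε)⁻¹ • x) * (∑ i, ∑ j, x i * B i j * x j)) (√ε • y) =
        ε * (G ((√ε / δ ε) • y) * Φ y) := by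
    intro y
    have hq : ∀ M : Matrix (Fin d) (Fin d) ℝ,
        ∑ i, ∑ j, (√ε • y) i * M i j * (√ε • y) j = ε * ∑ i, ∑ j, y i * M i j * y j := by
      intro M
      simp_rw [Finset.mul_sum]
      refine Finset.sum_congr rfl fun i _ => Finset.sum_congr rfl fun j _ => ?_
      simp only [PiLp.smul_apply, smul_eq_mul]
      linear_combination (y i * M i j * y j) * hs2
    have hmem : (√ε • y) ∈ Metric.closedBall (0 : EuclideanSpace ℝ (Fin d)) (δ ε) ↔
        ((√ε / δ ε) • y) ∈ Metric.closedBall (0 : EuclideanSpace ℝ (Fin d)) 1 := by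
      simp only [mem_closedBall_zero_iff, norm_smul, Real.norm_eq_abs, abs_of_pos hs,
        abs_of_pos (div_pos hs hδ0)]
      rw [div_mul_eq_mul_div, div_le_one hδ0]
    by_cases hy : (√ε • y) ∈ Metric.closedBall (0 : EuclideanSpace ℝ (Fin d)) (δ ε)
    · rw [Set.indicator_of_mem hy, hG, Set.indicator_of_mem (hmem.mp hy), hq, hq, smul_smul, hΦ]
      have e1 : (δ ε)⁻¹ * √ε = √ε / δ ε := by rw [div_eq_inv_mul]
      have e2 : -(ε * ∑ i, ∑ j, y i * A i j * y j) / (2 * ε) =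
          -(∑ i, ∑ j, y i * A i j * y j) / 2 := by field_simp
      rw [e1, e2]; ring
    · rw [Set.indicator_of_notMem hy, hG, Set.indicator_of_notMem (fun h => hy (hmem.mpr h))]
      simp
  simp_rw [hpt] at hc
  rw [integral_const_mul, finrank_euclideanSpace_fin, smul_eq_mul] at hc
  have hpow : (2 * Real.pi * ε) ^ (-(d : ℝ) / 2) = (√(2 * Real.pi) ^ d)⁻¹ * (√ε ^ d)⁻¹ := by
    rw [neg_div, Real.rpow_neg (by positivity), ← mul_inv, ← mul_pow,
      ← Real.sqrt_mul (by positivity), Real.sqrt_eq_rpow, ← Real.rpow_natCast, ← Real.rpow_mul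
      (by positivity)]
    congr 2; ring
  rw [hpow, mul_assoc, mul_assoc, ← hc]
  field_simp
end

section
/- Let U : ℝ^d → ℝ be continuously differentiable, let x₀ ∈ ℝ^d, and let V : ℝ^d → ℝ be continuously differentiable and satisfy: V(x₀) = 0 and V(y) > 0 for all y ≠ x₀; there exists a > 0 with V(y) = |y − x₀|² for all y ∈ B_a(x₀); there exists R > 0 with V(y) ≥ |y|² + |∇U(y)|² for all |y| ≥ R; and the function y ↦ ∇(e^{-V})(y) is square integrable on ℝ^d. Then for all sufficiently small ε > 0 the functions e^{-V/ε} and |∇V − ∇U|² e^{-V/ε} are Lebesgue integrable on ℝ^d, and lim_{ε→0⁺} ( ∫_{ℝ^d} |∇V(y) − ∇U(y)|² e^{-V(y)/ε} dy ) / ( ∫_{ℝ^d} e^{-V(z)/ε} dz ) = |∇U(x₀)|². -/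
open Filter Topology MeasureTheory

/-!
With `s = ε⁻¹ - 2`, split `e^{-V/ε} = e^{-sV} e^{-2V}`. The weight `e^{-2V}` makes both
integrands integrable: `|∇V|² e^{-2V} = |∇(e^{-V})|²` is integrable by hypothesis, while
`|∇U|² e^{-2V}` is dominated by a multiple of `e^{-V}`, itself dominated by a Gaussian, because of
the growth of `V`. The remaining factor `e^{-sV}`, normalized by its integral over the unit ball
at `x₀`, is a peak function concentrating at `x₀` as `s → ∞`: `V` is bounded below by a positive
constant off every neighbourhood of `x₀`. Hence (`tendsto_peak`) the normalized integrals of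
`|∇V - ∇U|² e^{-2V}` and of `e^{-2V}` tend to the values of these functions at `x₀`, and the
normalization cancels in the quotient. There `e^{-2V(x₀)} = 1`, and `∇V(x₀) = 0` as `x₀`
minimizes `V`.
-/

section Laplace

variable {d : ℕ}

lemma continuous_gradient {f : EuclideanSpace ℝ (Fin d) → ℝ} (hf : ContDiff ℝ 1 f) :
    Continuous (gradient f) :=
  (InnerProductSpace.toDual ℝ _).symm.continuous.comp (hf.continuous_fderiv one_ne_zero)

/-- The exponential weights `e^{-sV}` concentrate at `x₀` as `s → ∞`. Normalizing over a ball
rather than the whole space makes the mass near `x₀` exactly `1`, so that no tail estimate is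
needed. -/
lemma tendsto_peak {V g : EuclideanSpace ℝ (Fin d) → ℝ} {x₀ : EuclideanSpace ℝ (Fin d)}
    (hV : Continuous V) (hV0 : V x₀ = 0)
    (hm : ∀ u : Set (EuclideanSpace ℝ (Fin d)), IsOpen u → x₀ ∈ u →
      ∃ m : ℝ, 0 < m ∧ ∀ y, y ∉ u → m ≤ V y)
    (hg : Integrable g) (hgc : ContinuousAt g x₀) :
    Tendsto (fun s : ℝ => (∫ y, Real.exp (-(s * V y)) * g y) /
      ∫ y in Metric.closedBall x₀ 1, Real.exp (-(s * V y))) atTop (𝓝 (g x₀)) := by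
  set t := Metric.closedBall x₀ (1 : ℝ) with ht
  set N : ℝ → ℝ := fun s => ∫ y in t, Real.exp (-(s * V y)) with hN
  have hcont : ∀ s : ℝ, Continuous fun y => Real.exp (-(s * V y)) := fun s => by fun_prop
  have hint : ∀ s : ℝ, IntegrableOn (fun y => Real.exp (-(s * V y))) t := fun s =>
    (hcont s).continuousOn.integrableOn_compact (isCompact_closedBall _ _)
  have htfin : volume t ≠ ⊤ := (isCompact_closedBall _ _).measure_lt_top.ne
  -- The mass of the sublevel set `{V < m / 2}` bounds the normalization from below.
  have hlow : ∀ m : ℝ, 0 < m → ∃ c : ℝ, 0 < c ∧ ∀ s : ℝ, 0 ≤ s →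
      c * Real.exp (-(s * (m / 2))) ≤ N s := by
    intro m hm0
    set A := t ∩ {y | V y < m / 2} with hA
    have hAmeas : MeasurableSet A :=
      Metric.isClosed_closedBall.measurableSet.inter (isOpen_lt hV continuous_const).measurableSet
    have hAn : A ∈ 𝓝 x₀ := inter_mem (Metric.closedBall_mem_nhds _ one_pos)
      ((isOpen_lt hV continuous_const).mem_nhds (by simpa [hV0] using hm0))
    have hAfin : volume A ≠ ⊤ := measure_ne_top_of_subset Set.inter_subset_left htfin
    refine ⟨volume.real A, ?_, fun s hs => ?_⟩
    · exact ENNReal.toReal_pos (Measure.measure_pos_of_mem_nhds _ hAn).ne' hAfin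
    · calc volume.real A * Real.exp (-(s * (m / 2)))
          = ∫ y in A, Real.exp (-(s * (m / 2))) := by simp
        _ ≤ ∫ y in A, Real.exp (-(s * V y)) := by
            refine setIntegral_mono_on (integrableOn_const hAfin)
              ((hint s).mono_set Set.inter_subset_left) hAmeas fun y hy => ?_
            have : V y ≤ m / 2 := (show V y < m / 2 from hy.2).le
            gcongr
        _ ≤ N s := setIntegral_mono_set (hint s)
            (Eventually.of_forall fun y => (Real.exp_pos _).le)
            Set.inter_subset_left.eventuallyLE
  have hNpos : ∀ s : ℝ, 0 ≤ s → 0 < N s := by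
    intro s hs
    obtain ⟨c, hc, h⟩ := hlow 1 one_pos
    exact lt_of_lt_of_le (by positivity) (h s hs)
  have key := tendsto_setIntegral_peak_smul_of_integrableOn_of_tendsto
    (μ := (volume : Measure (EuclideanSpace ℝ (Fin d)))) (s := Set.univ) (t := t) (x₀ := x₀)
    (l := (atTop : Filter ℝ)) (φ := fun s y => Real.exp (-(s * V y)) / N s) (g := g) (a := g x₀)
    MeasurableSet.univ Metric.isClosed_closedBall.measurableSet (Set.subset_univ _)
    (by rw [nhdsWithin_univ]; exact Metric.closedBall_mem_nhds _ one_pos) htfin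
    ?_ ?_ ?_ ?_ hg.integrableOn (by rw [nhdsWithin_univ]; exact hgc)
  · refine key.congr fun s => ?_
    simp only [Measure.restrict_univ, smul_eq_mul]
    rw [← integral_div]
    congr 1; ext y; ring
  · filter_upwards [eventually_ge_atTop 0] with s hs y _
    exact div_nonneg (Real.exp_pos _).le (hNpos s hs).le
  · intro u hu hxu
    obtain ⟨m, hm0, hmV⟩ := hm u hu hxu
    obtain ⟨c, hc, hcN⟩ := hlow m hm0
    rw [Metric.tendstoUniformlyOn_iff]
    intro δ hδ
    have hlim : Tendsto (fun s : ℝ => Real.exp (-(s * (m / 2))) / c) atTop (𝓝 0) := by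
      have h1 : Tendsto (fun s : ℝ => s * (m / 2)) atTop atTop :=
        tendsto_id.atTop_mul_const (by positivity)
      simpa using (Real.tendsto_exp_neg_atTop_nhds_zero.comp h1).div_const c
    filter_upwards [hlim.eventually_lt_const hδ, eventually_ge_atTop 0] with s hs hs0 y hy
    have hVy := hmV y hy.2
    simp only [Pi.zero_apply, dist_zero_left, Real.norm_eq_abs]
    rw [abs_of_nonneg (div_nonneg (Real.exp_pos _).le (hNpos s hs0).le)]
    refine lt_of_le_of_lt ?_ hs
    rw [div_le_div_iff₀ (hNpos s hs0) hc]
    calc Real.exp (-(s * V y)) * c ≤ Real.exp (-(s * m)) * c := by gcongr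
      _ = Real.exp (-(s * (m / 2))) * (c * Real.exp (-(s * (m / 2)))) := by
          rw [mul_left_comm, ← Real.exp_add, mul_comm]; ring_nf
      _ ≤ Real.exp (-(s * (m / 2))) * N s := by gcongr; exact hcN s hs0
  · refine tendsto_const_nhds.congr' ?_
    filter_upwards [eventually_ge_atTop 0] with s hs
    rw [integral_div]
    exact (div_self (hNpos s hs).ne').symm
  · exact Eventually.of_forall fun s => ((hcont s).div_const _).aestronglyMeasurable

end Laplace

/-- Laplace-method computation for the recovery measures of the Γ-limsup at scale
`θ_ε^{(-1)} = ε`: with `V` a smooth penalization of the point `x₀`,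
`(∫ |∇V − ∇U|² e^{-V/ε}) / (∫ e^{-V/ε}) → |∇U(x₀)|²` as `ε → 0⁺`. -/
theorem stmt5 {d : ℕ}
    (U V : EuclideanSpace ℝ (Fin d) → ℝ)
    (hU : ContDiff ℝ 1 U) (hV : ContDiff ℝ 1 V)
    (x₀ : EuclideanSpace ℝ (Fin d))
    (hV0 : V x₀ = 0) (hVpos : ∀ y, y ≠ x₀ → 0 < V y)
    (hVloc : ∃ a : ℝ, 0 < a ∧ ∀ y ∈ Metric.closedBall x₀ a, V y = ‖y - x₀‖ ^ 2)
    (hVgrow : ∃ R : ℝ, 0 < R ∧ ∀ y : EuclideanSpace ℝ (Fin d), R ≤ ‖y‖ →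
      ‖y‖ ^ 2 + ‖gradient U y‖ ^ 2 ≤ V y)
    (hL2 : Integrable (fun y => ‖gradient (fun z => Real.exp (-V z)) y‖ ^ 2)) :
    (∃ ε₀ : ℝ, 0 < ε₀ ∧ ∀ ε : ℝ, 0 < ε → ε < ε₀ →
        Integrable (fun y => Real.exp (-V y / ε)) ∧
        Integrable (fun y => ‖gradient V y - gradient U y‖ ^ 2 * Real.exp (-V y / ε))) ∧
    Tendsto (fun ε =>
        (∫ y, ‖gradient V y - gradient U y‖ ^ 2 * Real.exp (-V y / ε)) /
          ∫ z, Real.exp (-V z / ε))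
      (𝓝[>] (0:ℝ)) (𝓝 (‖gradient U x₀‖ ^ 2)) := by
  obtain ⟨R, hR, hgrow⟩ := hVgrow
  have hVc := hV.continuous
  have hVnn : ∀ y, 0 ≤ V y := fun y => by
    by_cases h : y = x₀
    · rw [h, hV0]
    · exact (hVpos y h).le
  have hgV := continuous_gradient hV
  have hgU := continuous_gradient hU
  have hm : ∀ u : Set (EuclideanSpace ℝ (Fin d)), IsOpen u → x₀ ∈ u →
      ∃ m : ℝ, 0 < m ∧ ∀ y, y ∉ u → m ≤ V y := by
    intro u hu hxu
    have hK : IsCompact (Metric.closedBall (0 : EuclideanSpace ℝ (Fin d)) R \ u) :=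
      (isCompact_closedBall _ _).diff hu
    have hout : ∀ y : EuclideanSpace ℝ (Fin d), R ≤ ‖y‖ → R ^ 2 ≤ V y := fun y hy => by
      have h1 := hgrow y hy
      have h2 : R ^ 2 ≤ ‖y‖ ^ 2 := by gcongr
      nlinarith [sq_nonneg ‖gradient U y‖]
    obtain hempty | hne :=
      (Metric.closedBall (0 : EuclideanSpace ℝ (Fin d)) R \ u).eq_empty_or_nonempty
    · refine ⟨R ^ 2, by positivity, fun y hy => hout y ?_⟩
      by_contra! hlt
      have : y ∈ Metric.closedBall (0 : EuclideanSpace ℝ (Fin d)) R \ u :=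
        ⟨by simpa using hlt.le, hy⟩
      simp [hempty] at this
    · obtain ⟨z, hz, hzmin⟩ := hK.exists_isMinOn hne hVc.continuousOn
      have hzx : z ≠ x₀ := fun h => hz.2 (h ▸ hxu)
      refine ⟨min (R ^ 2) (V z), lt_min (by positivity) (hVpos z hzx), fun y hy => ?_⟩
      by_cases hyR : R ≤ ‖y‖
      · exact (min_le_left _ _).trans (hout y hyR)
      · exact (min_le_right _ _).trans (hzmin ⟨by simpa using (not_le.1 hyR).le, hy⟩)
  -- `e^{-V}` is dominated by `e^{R²} e^{-|y|²}`, also inside the ball of radius `R` since `V ≥ 0`.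
  have hE1 : Integrable (fun y => Real.exp (-V y)) := by
    have hG : Integrable (fun y : EuclideanSpace ℝ (Fin d) => Real.exp (-1 * ‖y‖ ^ 2)) := by
      refine Integrable.of_integral_ne_zero ?_
      rw [GaussianFourier.integral_rexp_neg_mul_sq_norm one_pos]
      positivity
    refine (hG.const_mul (Real.exp (R ^ 2))).mono' (by fun_prop) (Eventually.of_forall fun y => ?_)
    rw [Real.norm_eq_abs, Real.abs_exp, ← Real.exp_add]
    apply Real.exp_le_exp.2
    by_cases hyR : R ≤ ‖y‖
    · nlinarith [hgrow y hyR, sq_nonneg ‖gradient U y‖]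
    · have : ‖y‖ ^ 2 ≤ R ^ 2 := by gcongr; exact (not_le.1 hyR).le
      linarith [hVnn y]
  have hE2 : Integrable (fun y => Real.exp (-(2 * V y))) := by
    refine hE1.mono' (by fun_prop) (Eventually.of_forall fun y => ?_)
    rw [Real.norm_eq_abs, Real.abs_exp]
    exact Real.exp_le_exp.2 (by linarith [hVnn y])
  have hU2 : Integrable (fun y => ‖gradient U y‖ ^ 2 * Real.exp (-(2 * V y))) := by
    obtain ⟨C, hC⟩ := (isCompact_closedBall (0 : EuclideanSpace ℝ (Fin d)) R).bddAbove_image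
      (f := fun y => ‖gradient U y‖ ^ 2) (by fun_prop)
    have hC' : ∀ y : EuclideanSpace ℝ (Fin d), ‖y‖ ≤ R → ‖gradient U y‖ ^ 2 ≤ C := fun y hy =>
      hC ⟨y, by simpa using hy, rfl⟩
    have hC0 : 0 ≤ C := (sq_nonneg _).trans (hC' 0 (by simpa using hR.le))
    refine (hE1.const_mul (C + 1)).mono' (by fun_prop) (Eventually.of_forall fun y => ?_)
    rw [Real.norm_of_nonneg (by positivity)]
    have hsplit : Real.exp (-(2 * V y)) = Real.exp (-V y) * Real.exp (-V y) := by
      rw [← Real.exp_add]; ring_nf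
    rw [hsplit, ← mul_assoc]
    gcongr
    have hle1 : Real.exp (-V y) ≤ 1 := Real.exp_le_one_iff.2 (by linarith [hVnn y])
    by_cases hyR : R ≤ ‖y‖
    · have h1 : ‖gradient U y‖ ^ 2 ≤ V y := by nlinarith [hgrow y hyR, sq_nonneg ‖y‖]
      calc ‖gradient U y‖ ^ 2 * Real.exp (-V y) ≤ V y * Real.exp (-V y) := by gcongr
        _ ≤ Real.exp (V y) * Real.exp (-V y) := by
            gcongr; linarith [Real.add_one_le_exp (V y)]
        _ = 1 := by rw [← Real.exp_add]; simp
        _ ≤ C + 1 := by linarith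
    · have h1 := hC' y (not_le.1 hyR).le
      calc ‖gradient U y‖ ^ 2 * Real.exp (-V y) ≤ C * 1 := by gcongr
        _ ≤ C + 1 := by linarith
  have hV2 : Integrable (fun y => ‖gradient V y‖ ^ 2 * Real.exp (-(2 * V y))) := by
    refine hL2.congr (Eventually.of_forall fun y => ?_)
    have hd : HasFDerivAt V (fderiv ℝ V y) y :=
      (hV.differentiable one_ne_zero).differentiableAt.hasFDerivAt
    have hd2 := hd.neg.exp.fderiv
    have hgr : gradient (fun z => Real.exp (-V z)) y = Real.exp (-V y) • -gradient V y := by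
      simp only [gradient]
      rw [← map_neg, ← map_smul]
      congr 1
    simp only [hgr, norm_smul, norm_neg, Real.norm_eq_abs, Real.abs_exp]
    rw [mul_pow, ← Real.exp_nat_mul, mul_comm]
    push_cast
    ring_nf
  have hF2 : Integrable
      (fun y => ‖gradient V y - gradient U y‖ ^ 2 * Real.exp (-(2 * V y))) := by
    refine ((hV2.add hU2).const_mul 2).mono' (by fun_prop) (Eventually.of_forall fun y => ?_)
    rw [Real.norm_of_nonneg (by positivity)]
    have h1 := norm_sub_le (gradient V y) (gradient U y)
    have h2 : ‖gradient V y - gradient U y‖ ^ 2 ≤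
        2 * (‖gradient V y‖ ^ 2 + ‖gradient U y‖ ^ 2) := by
      calc _ ≤ (‖gradient V y‖ + ‖gradient U y‖) ^ 2 := by gcongr
        _ ≤ _ := add_sq_le
    calc _ ≤ 2 * (‖gradient V y‖ ^ 2 + ‖gradient U y‖ ^ 2) * Real.exp (-(2 * V y)) := by gcongr
      _ = _ := by simp only [Pi.add_apply]; ring
  have hexp : ∀ ε : ℝ, ∀ y,
      Real.exp (-V y / ε) = Real.exp (-((ε⁻¹ - 2) * V y)) * Real.exp (-(2 * V y)) := by
    intro ε y
    rw [← Real.exp_add]; congr 1; ring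
  have hle : ∀ ε : ℝ, 0 < ε → ε < 1 / 2 → ∀ y, Real.exp (-V y / ε) ≤ Real.exp (-(2 * V y)) := by
    intro ε h0 h1 y
    apply Real.exp_le_exp.2
    have h2 : 2 ≤ ε⁻¹ := by
      rw [le_inv_comm₀ two_pos h0]; linarith
    rw [neg_div, div_eq_inv_mul]
    nlinarith [mul_le_mul_of_nonneg_right h2 (hVnn y)]
  refine ⟨⟨1 / 2, by norm_num, fun ε h0 h1 => ⟨?_, ?_⟩⟩, ?_⟩
  · refine hE2.mono' (by fun_prop) (Eventually.of_forall fun y => ?_)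
    rw [Real.norm_eq_abs, Real.abs_exp]
    exact hle ε h0 h1 y
  · refine hF2.mono' (by fun_prop) (Eventually.of_forall fun y => ?_)
    rw [Real.norm_of_nonneg (by positivity)]
    exact mul_le_mul_of_nonneg_left (hle ε h0 h1 y) (by positivity)
  · have hgrad0 : gradient V x₀ = 0 := by
      have hmin : IsLocalMin V x₀ := Eventually.of_forall fun y => by rw [hV0]; exact hVnn y
      simp [gradient, hmin.fderiv_eq_zero]
    have hs : Tendsto (fun ε : ℝ => ε⁻¹ - 2) (𝓝[>] 0) atTop :=
      tendsto_atTop_add_const_right _ (-2) tendsto_inv_nhdsGT_zero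
    have hnum := (tendsto_peak hVc hV0 hm hF2
      (Continuous.continuousAt (by fun_prop))).comp hs
    have hden := (tendsto_peak hVc hV0 hm hE2
      (Continuous.continuousAt (by fun_prop))).comp hs
    have hq := hnum.div hden (Real.exp_pos _).ne'
    simp only [hgrad0, hV0, zero_sub, norm_neg, mul_zero, neg_zero, Real.exp_zero, mul_one,
      div_one] at hq
    refine hq.congr' (Eventually.of_forall fun ε => ?_)
    have hNne : (∫ y in Metric.closedBall x₀ 1, Real.exp (-((ε⁻¹ - 2) * V y))) ≠ 0 := by
      have : NeZero (volume.restrict (Metric.closedBall x₀ 1)) :=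
        ⟨by simpa using (Metric.measure_closedBall_pos volume x₀ one_pos).ne'⟩
      refine (integral_exp_pos ?_).ne'
      exact (Continuous.continuousOn (by fun_prop)).integrableOn_compact
        (isCompact_closedBall _ _)
    simp only [Pi.div_apply, Function.comp_apply]
    rw [div_div_div_cancel_right₀ hNne]
    congr 1
    · congr 1; ext y; rw [hexp ε y]; ring
    · congr 1; ext y; rw [hexp ε y]
end

section
/- Let U : ℝ^d → ℝ be three times continuously differentiable with U(0) = 0, ∇U(0) = 0 and ∇²U(0) invertible. Write ∇²U(0) = 𝕌 D 𝕌ᵀ with 𝕌 orthogonal and D = diag(λ₁,…,λ_d), set H̃ := 𝕌 D̃ 𝕌ᵀ with D̃ := diag(min(λ₁,0),…,min(λ_d,0)), and G(x) := x·H̃x. Let φ : ℝ^d → [0,1] be continuous with φ = 1 on B_{1/2} and φ = 0 outside B_1, and let δ : (0,∞) → (0,∞) satisfy √ε/δ(ε) → 0 and δ(ε)³/ε → 0 as ε → 0⁺. Then lim_{ε→0⁺} (1/ε) · ( ∫_{ℝ^d} e^{(G(x) − U(x))/ε} φ(x/δ(ε))² (x·H̃²x) dx ) / ( ∫_{ℝ^d}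 e^{(G(y) − U(y))/ε} φ(y/δ(ε))² dy ) = Σ_{i=1}^d max(−λ_i, 0). -/
/-!
Rotating by the orthogonal matrix reduces the claim to a Hessian `diag λ`. There
`min(λᵢ, 0) - λᵢ / 2 = -|λᵢ| / 2`, so the exponent `(G - U) / ε` is `-∑ |λᵢ| yᵢ² / (2ε)` up to the
Taylor remainder of `U`, and in the variable `z = y / √ε` both integrals become Gaussian integrals
in the limit. A coordinate `zᵢ` of this Gaussian has variance `1 / |λᵢ|`, so the ratio tends to
`∑ min(λᵢ, 0)² / |λᵢ| = ∑ max(-λᵢ, 0)`.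

The passage to the limit is dominated convergence (`tendsto_rescaled`). Only the Peano form of the
Taylor expansion is used (`taylor_critical`): the remainder is `o(‖x‖²)`, hence it is absorbed by
half of the Gaussian exponent on the support of the cutoff as soon as `δ(ε)` is small, and it
vanishes pointwise in `z` after division by `ε`. Thus `δ(ε)³ / ε → 0` enters only through
`δ(ε) → 0`, while `√ε / δ(ε) → 0` makes the cutoff tend to `1` pointwise. The Gaussian second
moments come from Fubini and one integration by parts (`integral_sq_mul_diagGauss`).
-/

open Filter Topology MeasureTheory Matrix

/-- The quadratic form `x ↦ x·Mx` of a matrix `M` on Euclidean space. -/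
def quadForm {d : ℕ} (M : Matrix (Fin d) (Fin d) ℝ)
    (x : EuclideanSpace ℝ (Fin d)) : ℝ :=
  ∑ i, ∑ j, x i * M i j * x j

/-- The negative part `H̃ = 𝕌 diag(min(λ,0)) 𝕌ᵀ` of the symmetric matrix
`𝕌 diag(λ) 𝕌ᵀ`. -/
def negPart {d : ℕ} (Umat : Matrix (Fin d) (Fin d) ℝ) (lam : Fin d → ℝ) :
    Matrix (Fin d) (Fin d) ℝ :=
  Umat * Matrix.diagonal (fun i => min (lam i) 0) * Umatᵀ

/-! ### Second moments of diagonal Gaussians -/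

theorem integrable_sq_mul_exp {b : ℝ} (hb : 0 < b) :
    Integrable (fun x : ℝ => x ^ 2 * Real.exp (-b * x ^ 2)) := by
  have h := integrable_rpow_mul_exp_neg_mul_sq hb (s := 2) (by norm_num)
  refine h.congr (ae_of_all _ fun x => ?_)
  simp

theorem integral_sq_mul_exp {b : ℝ} (hb : 0 < b) :
    ∫ x : ℝ, x ^ 2 * Real.exp (-b * x ^ 2) =
      1 / (2 * b) * ∫ x : ℝ, Real.exp (-b * x ^ 2) := by
  have h := integral_mul_deriv_eq_deriv_mul_of_integrable
    (u := fun x : ℝ => x) (u' := fun _ => 1)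
    (v := fun x : ℝ => Real.exp (-b * x ^ 2))
    (v' := fun x : ℝ => Real.exp (-b * x ^ 2) * (-b * (2 * x)))
    (fun x _ => hasDerivAt_id x)
    (fun x _ => by
      have := (((hasDerivAt_id x).pow 2).const_mul (-b)).exp
      simpa using this)
    (((integrable_sq_mul_exp hb).const_mul (-2 * b)).congr
      (ae_of_all _ fun x => by simp only [Pi.mul_apply]; ring))
    ((integrable_exp_neg_mul_sq hb).congr (ae_of_all _ fun x => by simp))
    (integrable_mul_exp_neg_mul_sq hb)
  have e : ∀ x : ℝ, x * (Real.exp (-b * x ^ 2) * (-b * (2 * x))) =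
      (-2 * b) * (x ^ 2 * Real.exp (-b * x ^ 2)) := fun x => by ring
  simp only [e, one_mul, integral_const_mul] at h
  rw [one_div, inv_mul_eq_div, eq_div_iff (by positivity)]
  linarith

/-- The centred Gaussian density on Euclidean space, up to normalisation, with independent
coordinates: `y ↦ exp (-∑ bᵢ yᵢ²)`. -/
noncomputable def diagGauss {d : ℕ} (b : Fin d → ℝ) (y : EuclideanSpace ℝ (Fin d)) : ℝ :=
  Real.exp (-∑ i, b i * y i ^ 2)

theorem diagGauss_eq_prod {d : ℕ} (b : Fin d → ℝ) (y : EuclideanSpace ℝ (Fin d)) :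
    diagGauss b y = ∏ i, Real.exp (-b i * y i ^ 2) := by
  rw [diagGauss, ← Real.exp_sum, ← Finset.sum_neg_distrib]
  simp only [neg_mul]

theorem sq_mul_diagGauss_eq_prod {d : ℕ} (b : Fin d → ℝ) (j : Fin d)
    (y : EuclideanSpace ℝ (Fin d)) :
    y j ^ 2 * diagGauss b y =
      ∏ i, (fun t : ℝ => (if i = j then t ^ 2 else 1) * Real.exp (-b i * t ^ 2)) (y i) := by
  rw [diagGauss_eq_prod]
  rw [Finset.prod_mul_distrib, Finset.prod_ite_eq' Finset.univ j (fun i => y i ^ 2)]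
  simp

theorem continuous_diagGauss {d : ℕ} (b : Fin d → ℝ) : Continuous (diagGauss b) := by
  unfold diagGauss
  fun_prop

theorem integrable_prod_coord {d : ℕ} {f : Fin d → ℝ → ℝ} (hf : ∀ i, Integrable (f i)) :
    Integrable (fun y : EuclideanSpace ℝ (Fin d) => ∏ i, f i (y i)) :=
  (EuclideanSpace.volume_preserving_symm_measurableEquiv_toLp (Fin d)).integrable_comp_of_integrable
    (Integrable.fintype_prod (μ := fun _ => volume) hf)

theorem integral_prod_coord {d : ℕ} (f : Fin d → ℝ → ℝ) :
    ∫ y : EuclideanSpace ℝ (Fin d), ∏ i, f i (y i) = ∏ i, ∫ t, f i t := by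
  rw [← integral_fintype_prod_volume_eq_prod]
  exact (EuclideanSpace.volume_preserving_symm_measurableEquiv_toLp (Fin d)).integral_comp'
    (fun y : Fin d → ℝ => ∏ i, f i (y i))

theorem integrable_diagGauss {d : ℕ} {b : Fin d → ℝ} (hb : ∀ i, 0 < b i) :
    Integrable (diagGauss b) := by
  simp_rw [funext (diagGauss_eq_prod b)]
  exact integrable_prod_coord (f := fun i t => Real.exp (-b i * t ^ 2))
    fun i => integrable_exp_neg_mul_sq (hb i)

theorem integrable_sq_mul_diagGauss {d : ℕ} {b : Fin d → ℝ} (hb : ∀ i, 0 < b i) (j : Fin d) :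
    Integrable (fun y => y j ^ 2 * diagGauss b y) := by
  simp_rw [sq_mul_diagGauss_eq_prod b j]
  refine integrable_prod_coord (f := fun i t => (if i = j then t ^ 2 else 1) *
    Real.exp (-b i * t ^ 2)) fun i => ?_
  by_cases h : i = j
  · simpa [h] using integrable_sq_mul_exp (hb j)
  · simpa [h] using integrable_exp_neg_mul_sq (hb i)

/-- Second moment of a coordinate of the centred Gaussian, by Fubini and the
one-dimensional case. -/
theorem integral_sq_mul_diagGauss {d : ℕ} {b : Fin d → ℝ} (hb : ∀ i, 0 < b i) (j : Fin d) :
    ∫ y, y j ^ 2 * diagGauss b y = 1 / (2 * b j) * ∫ y, diagGauss b y := by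
  simp_rw [sq_mul_diagGauss_eq_prod b j, diagGauss_eq_prod b]
  rw [integral_prod_coord (fun i t => (if i = j then t ^ 2 else 1) * Real.exp (-b i * t ^ 2)),
    integral_prod_coord (fun i t => Real.exp (-b i * t ^ 2))]
  rw [← Finset.mul_prod_erase _ _ (Finset.mem_univ j),
    ← Finset.mul_prod_erase Finset.univ (fun i => ∫ t, Real.exp (-b i * t ^ 2))
      (Finset.mem_univ j), ← mul_assoc, ← integral_sq_mul_exp (hb j)]
  congr 1
  · simp
  · refine Finset.prod_congr rfl fun i hi => ?_
    simp [Finset.ne_of_mem_erase hi]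

theorem integral_diagGauss_pos {d : ℕ} {b : Fin d → ℝ} (hb : ∀ i, 0 < b i) :
    0 < ∫ y, diagGauss b y := by
  simp_rw [diagGauss_eq_prod b]
  rw [integral_prod_coord (fun i t => Real.exp (-b i * t ^ 2))]
  refine Finset.prod_pos fun i _ => ?_
  rw [integral_gaussian]
  have := hb i
  positivity

/-! ### Laplace asymptotics for a diagonal Hessian -/

theorem tendsto_zero_of_cube_div {δ : ℝ → ℝ}
    (h : Tendsto (fun ε => (δ ε) ^ 3 / ε) (𝓝[>] (0:ℝ)) (𝓝 0)) :
    Tendsto (fun ε => (δ ε) ^ 3) (𝓝[>] (0:ℝ)) (𝓝 0) := by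
  have h0 : Tendsto (fun ε : ℝ => ε) (𝓝[>] (0:ℝ)) (𝓝 0) := nhdsWithin_le_nhds
  have h1 := h.mul h0
  rw [mul_zero] at h1
  refine h1.congr' ?_
  filter_upwards [self_mem_nhdsWithin] with ε hε
  have : ε ≠ 0 := ne_of_gt hε
  field_simp

/-- In the rescaled variable `z = x/√ε`, the exponent `(G-V)/ε` is the Gaussian exponent
`-∑|λᵢ|zᵢ²/2` minus the Taylor remainder of `V` divided by `ε`. -/
theorem rescaled_exponent {d : ℕ} (V : EuclideanSpace ℝ (Fin d) → ℝ) (lam : Fin d → ℝ)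
    {ε : ℝ} (hε : 0 < ε) (z : EuclideanSpace ℝ (Fin d)) :
    (∑ i, min (lam i) 0 * (√ε • z) i ^ 2 - V (√ε • z)) / ε =
      -(∑ i, |lam i| / 2 * z i ^ 2) -
        (V (√ε • z) - ∑ i, lam i / 2 * (√ε • z) i ^ 2) / ε := by
  have hs : √ε ^ 2 = ε := Real.sq_sqrt hε.le
  have e : ∑ i, min (lam i) 0 * (√ε • z) i ^ 2 =
      -ε * (∑ i, |lam i| / 2 * z i ^ 2) + ∑ i, lam i / 2 * (√ε • z) i ^ 2 := by
    rw [Finset.mul_sum, ← Finset.sum_add_distrib]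
    refine Finset.sum_congr rfl fun i _ => ?_
    have hm : min (lam i) 0 = lam i / 2 - |lam i| / 2 := by
      rcases le_total (lam i) 0 with h | h
      · rw [min_eq_left h, abs_of_nonpos h]; ring
      · rw [min_eq_right h, abs_of_nonneg h]; ring
    simp only [PiLp.smul_apply, smul_eq_mul, mul_pow, hs, hm]
    ring
  rw [e]
  field_simp
  ring

/-- Laplace asymptotics after rescaling, for a weight `w` of moderate growth. Dominated
convergence: on the support of the cutoff `‖√ε z‖ ≤ δ(ε) → 0`, where the Taylor remainder is at
most a quarter of the quadratic form with coefficients `|λᵢ|`, so half of the Gaussian exponent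
survives. -/
theorem tendsto_rescaled {d : ℕ} {V : EuclideanSpace ℝ (Fin d) → ℝ} (hVc : Continuous V)
    {lam : Fin d → ℝ} (hlam : ∀ i, lam i ≠ 0)
    (hV : ∀ η > 0, ∃ r > 0, ∀ x, ‖x‖ ≤ r →
      |V x - ∑ i, lam i / 2 * x i ^ 2| ≤ η * ‖x‖ ^ 2)
    {ψ : EuclideanSpace ℝ (Fin d) → ℝ} (hψ : Continuous ψ)
    (hψ01 : ∀ x, ψ x ∈ Set.Icc (0:ℝ) 1)
    (hψ1 : ∀ x, ‖x‖ ≤ 1 / 2 → ψ x = 1) (hψ0 : ∀ x, 1 < ‖x‖ → ψ x = 0)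
    {δ : ℝ → ℝ} (hδpos : ∀ ε : ℝ, 0 < ε → 0 < δ ε)
    (hδ1 : Tendsto (fun ε => √ε / δ ε) (𝓝[>] (0:ℝ)) (𝓝 0))
    (hδ2 : Tendsto (fun ε => (δ ε) ^ 3) (𝓝[>] (0:ℝ)) (𝓝 0))
    {w : EuclideanSpace ℝ (Fin d) → ℝ} (hw : Continuous w) (hw0 : ∀ x, 0 ≤ w x)
    (hint : Integrable (fun z => diagGauss (fun i => |lam i| / 4) z * w z)) :
    Tendsto (fun ε => ∫ z, Real.exp
        ((∑ i, min (lam i) 0 * (√ε • z) i ^ 2 - V (√ε • z)) / ε) *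
          ψ ((δ ε)⁻¹ • √ε • z) ^ 2 * w z)
      (𝓝[>] (0:ℝ)) (𝓝 (∫ z, diagGauss (fun i => |lam i| / 2) z * w z)) := by
  have hsqrt : Tendsto (fun ε : ℝ => √ε) (𝓝[>] (0:ℝ)) (𝓝 0) := by
    have := (Real.continuous_sqrt.tendsto 0).mono_left (nhdsWithin_le_nhds (s := Set.Ioi 0))
    simpa using this
  refine tendsto_integral_filter_of_dominated_convergence
    (fun z => diagGauss (fun i => |lam i| / 4) z * w z) ?_ ?_ hint ?_
  · refine Eventually.of_forall fun ε => Continuous.aestronglyMeasurable ?_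
    fun_prop
  · obtain ⟨η, hη, hη0⟩ : ∃ η : ℝ, (∀ i, η < |lam i| / 4) ∧ 0 < η := by
      have h1 : ∀ᶠ η in 𝓝[>] (0:ℝ), ∀ i, η < |lam i| / 4 :=
        eventually_all.2 fun i => nhdsWithin_le_nhds
          (Iio_mem_nhds (div_pos (abs_pos.2 (hlam i)) (by norm_num)))
      exact (h1.and self_mem_nhdsWithin).exists
    obtain ⟨r, hr, hR⟩ := hV η hη0
    filter_upwards [self_mem_nhdsWithin, hδ2.eventually (Iio_mem_nhds (pow_pos hr 3))]
      with ε hε hδr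
    have hε : 0 < ε := hε
    have hδr : δ ε < r := lt_of_pow_lt_pow_left₀ 3 hr.le hδr
    have hδp := hδpos ε hε
    refine ae_of_all _ fun z => ?_
    have hp := hψ01 ((δ ε)⁻¹ • √ε • z)
    have hdg : 0 ≤ diagGauss (fun i => |lam i| / 4) z := (Real.exp_pos _).le
    rw [Real.norm_eq_abs, abs_of_nonneg (mul_nonneg (by positivity) (hw0 z))]
    refine mul_le_mul_of_nonneg_right ?_ (hw0 z)
    by_cases hz : ‖√ε • z‖ ≤ δ ε
    · have h1 := (abs_le.1 (hR _ (hz.trans hδr.le))).1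
      have hexp : Real.exp ((∑ i, min (lam i) 0 * (√ε • z) i ^ 2 - V (√ε • z)) / ε) ≤
          diagGauss (fun i => |lam i| / 4) z := by
        rw [rescaled_exponent V lam hε]
        refine Real.exp_le_exp.2 ?_
        have h2 : -(η * ‖z‖ ^ 2) ≤
            (V (√ε • z) - ∑ i, lam i / 2 * (√ε • z) i ^ 2) / ε := by
          rw [le_div_iff₀ hε]
          rw [norm_smul, mul_pow, Real.norm_eq_abs, sq_abs, Real.sq_sqrt hε.le] at h1
          linarith
        have h3 : η * ‖z‖ ^ 2 ≤ ∑ i, |lam i| / 4 * z i ^ 2 := by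
          rw [EuclideanSpace.real_norm_sq_eq, Finset.mul_sum]
          exact Finset.sum_le_sum fun i _ =>
            mul_le_mul_of_nonneg_right (hη i).le (sq_nonneg _)
        have h4 : ∑ i, |lam i| / 2 * z i ^ 2 = 2 * ∑ i, |lam i| / 4 * z i ^ 2 := by
          rw [Finset.mul_sum]
          exact Finset.sum_congr rfl fun i _ => by ring
        linarith
      calc _ ≤ diagGauss (fun i => |lam i| / 4) z * 1 :=
            mul_le_mul hexp (pow_le_one₀ hp.1 hp.2) (by positivity) hdg
        _ = _ := mul_one _
    · have : ψ ((δ ε)⁻¹ • √ε • z) = 0 := by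
        refine hψ0 _ ?_
        rw [norm_smul, norm_inv, Real.norm_eq_abs, abs_of_pos hδp, inv_mul_eq_div,
          one_lt_div hδp]
        exact not_le.1 hz
      simpa [this] using hdg
  · refine ae_of_all _ fun z => ?_
    refine Tendsto.mul_const _ ?_
    have hz0 : Tendsto (fun ε : ℝ => ‖√ε • z‖) (𝓝[>] (0:ℝ)) (𝓝 0) := by
      have := (hsqrt.smul_const z).norm
      simpa using this
    have hrem : Tendsto (fun ε : ℝ =>
        (V (√ε • z) - ∑ i, lam i / 2 * (√ε • z) i ^ 2) / ε) (𝓝[>] (0:ℝ)) (𝓝 0) := by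
      rw [Metric.tendsto_nhds]
      intro κ hκ
      obtain ⟨r, hr, hR⟩ := hV (κ / (‖z‖ ^ 2 + 1)) (by positivity)
      filter_upwards [self_mem_nhdsWithin, hz0.eventually (Iio_mem_nhds hr)] with ε hε hzr
      have hε : 0 < ε := hε
      have h1 := hR _ (le_of_lt hzr)
      rw [norm_smul, mul_pow, Real.norm_eq_abs, sq_abs, Real.sq_sqrt hε.le] at h1
      rw [Real.dist_eq, sub_zero, abs_div, abs_of_pos hε, div_lt_iff₀ hε]
      refine h1.trans_lt ?_
      rw [div_mul_eq_mul_div, div_lt_iff₀ (by positivity)]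
      nlinarith [mul_pos hκ hε]
    have hcut : ∀ᶠ ε in 𝓝[>] (0:ℝ), ψ ((δ ε)⁻¹ • √ε • z) = 1 := by
      have h1 : Tendsto (fun ε : ℝ => √ε / δ ε * ‖z‖) (𝓝[>] (0:ℝ)) (𝓝 0) := by
        simpa using hδ1.mul_const ‖z‖
      filter_upwards [self_mem_nhdsWithin, h1.eventually (Iio_mem_nhds (by norm_num : (0:ℝ) < 1 / 2))]
        with ε hε hh
      refine hψ1 _ (le_of_lt ?_)
      rw [norm_smul, norm_smul, norm_inv, Real.norm_eq_abs, Real.norm_eq_abs,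
        abs_of_pos (hδpos ε hε), abs_of_nonneg (Real.sqrt_nonneg ε), ← mul_assoc, inv_mul_eq_div]
      exact hh
    have h2 := (Real.continuous_exp.tendsto _).comp
      (hrem.const_sub (-(∑ i, |lam i| / 2 * z i ^ 2)))
    rw [sub_zero] at h2
    refine h2.congr' ?_
    filter_upwards [self_mem_nhdsWithin, hcut] with ε hε hc
    rw [hc, rescaled_exponent V lam hε]
    simp

/-- The asymptotics when the Hessian is already diagonal. -/
theorem tendsto_ratio_diag {d : ℕ} {V : EuclideanSpace ℝ (Fin d) → ℝ} (hVc : Continuous V)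
    {lam : Fin d → ℝ} (hlam : ∀ i, lam i ≠ 0)
    (hV : ∀ η > 0, ∃ r > 0, ∀ x, ‖x‖ ≤ r →
      |V x - ∑ i, lam i / 2 * x i ^ 2| ≤ η * ‖x‖ ^ 2)
    {ψ : EuclideanSpace ℝ (Fin d) → ℝ} (hψ : Continuous ψ)
    (hψ01 : ∀ x, ψ x ∈ Set.Icc (0:ℝ) 1)
    (hψ1 : ∀ x, ‖x‖ ≤ 1 / 2 → ψ x = 1) (hψ0 : ∀ x, 1 < ‖x‖ → ψ x = 0)
    {δ : ℝ → ℝ} (hδpos : ∀ ε : ℝ, 0 < ε → 0 < δ ε)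
    (hδ1 : Tendsto (fun ε => √ε / δ ε) (𝓝[>] (0:ℝ)) (𝓝 0))
    (hδ2 : Tendsto (fun ε => (δ ε) ^ 3) (𝓝[>] (0:ℝ)) (𝓝 0)) :
    Tendsto (fun ε =>
        (1 / ε) *
          (∫ y, Real.exp ((∑ i, min (lam i) 0 * y i ^ 2 - V y) / ε) *
              ψ ((δ ε)⁻¹ • y) ^ 2 * ∑ i, min (lam i) 0 ^ 2 * y i ^ 2) /
          ∫ y, Real.exp ((∑ i, min (lam i) 0 * y i ^ 2 - V y) / ε) *
            ψ ((δ ε)⁻¹ • y) ^ 2)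
      (𝓝[>] (0:ℝ)) (𝓝 (∑ i, max (-(lam i)) 0)) := by
  have hb4 : ∀ i, 0 < |lam i| / 4 := fun i => div_pos (abs_pos.2 (hlam i)) (by norm_num)
  have hb2 : ∀ i, 0 < |lam i| / 2 := fun i => div_pos (abs_pos.2 (hlam i)) (by norm_num)
  have hsq : ∀ {b : Fin d → ℝ}, (∀ i, 0 < b i) → ∀ i, Integrable
      (fun z => diagGauss b z * (min (lam i) 0 ^ 2 * z i ^ 2)) := fun hb i =>
    ((integrable_sq_mul_diagGauss hb i).const_mul (min (lam i) 0 ^ 2)).congr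
      (ae_of_all _ fun z => by ring)
  have hN := tendsto_rescaled hVc hlam hV hψ hψ01 hψ1 hψ0 hδpos hδ1 hδ2
    (w := fun z => ∑ i, min (lam i) 0 ^ 2 * z i ^ 2) (by fun_prop)
    (fun z => Finset.sum_nonneg fun i _ => by positivity)
    (by
      simp_rw [Finset.mul_sum]
      exact integrable_finsetSum _ fun i _ => hsq hb4 i)
  have hD := tendsto_rescaled hVc hlam hV hψ hψ01 hψ1 hψ0 hδpos hδ1 hδ2
    (w := fun _ => 1) continuous_const (fun _ => zero_le_one)
    (by simpa using integrable_diagGauss hb4)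
  have hpos := integral_diagGauss_pos hb2
  have hval : (∫ z, diagGauss (fun i => |lam i| / 2) z * ∑ i, min (lam i) 0 ^ 2 * z i ^ 2) /
      (∫ z, diagGauss (fun i => |lam i| / 2) z * 1) = ∑ i, max (-(lam i)) 0 := by
    simp_rw [mul_one, Finset.mul_sum]
    rw [integral_finsetSum _ fun i _ => hsq hb2 i, Finset.sum_div]
    refine Finset.sum_congr rfl fun i _ => ?_
    have e : ∀ z : EuclideanSpace ℝ (Fin d), diagGauss (fun i => |lam i| / 2) z *
        (min (lam i) 0 ^ 2 * z i ^ 2) =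
        min (lam i) 0 ^ 2 * (z i ^ 2 * diagGauss (fun i => |lam i| / 2) z) := fun z => by ring
    simp_rw [e]
    rw [integral_const_mul, integral_sq_mul_diagGauss hb2]
    have h0 : |lam i| ≠ 0 := abs_ne_zero.2 (hlam i)
    rw [div_eq_iff hpos.ne', ← mul_assoc]
    congr 1
    rcases le_total (lam i) 0 with h | h
    · rw [min_eq_left h, max_eq_left (by linarith), ← sq_abs]
      field_simp
      exact abs_of_nonpos h
    · rw [min_eq_right h, max_eq_right (by linarith)]
      simp
  rw [← hval]
  refine (hN.div hD (by simpa using hpos.ne')).congr' ?_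
  -- For `ε > 0` the change of variables `y = √ε z` multiplies both integrals by the same Jacobian,
  -- and `y` enters the numerator quadratically, which accounts for the factor `1 / ε`.
  filter_upwards [self_mem_nhdsWithin] with ε hε
  have hε : 0 < ε := hε
  have hs : 0 < √ε := Real.sqrt_pos.2 hε
  have cN := Measure.integral_comp_smul volume (fun y : EuclideanSpace ℝ (Fin d) =>
    Real.exp ((∑ i, min (lam i) 0 * y i ^ 2 - V y) / ε) *
      ψ ((δ ε)⁻¹ • y) ^ 2 * ∑ i, min (lam i) 0 ^ 2 * y i ^ 2) √ε
  have cD := Measure.integral_comp_smul volume (fun y : EuclideanSpace ℝ (Fin d) =>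
    Real.exp ((∑ i, min (lam i) 0 * y i ^ 2 - V y) / ε) * ψ ((δ ε)⁻¹ • y) ^ 2) √ε
  have hq : ∀ z : EuclideanSpace ℝ (Fin d), ∑ i, min (lam i) 0 ^ 2 * (√ε • z) i ^ 2 =
      ε * ∑ i, min (lam i) 0 ^ 2 * z i ^ 2 := fun z => by
    rw [Finset.mul_sum]
    refine Finset.sum_congr rfl fun i _ => ?_
    rw [PiLp.smul_apply, smul_eq_mul, mul_pow, Real.sq_sqrt hε.le]
    ring
  simp only [hq, mul_left_comm _ ε, integral_const_mul] at cN
  simp only [smul_eq_mul] at cN cD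
  set c := |(√ε ^ Module.finrank ℝ (EuclideanSpace ℝ (Fin d)))⁻¹| with hc
  have hc0 : 0 < c := by positivity
  have cN' := (eq_div_iff hε.ne').2 ((mul_comm _ _).trans cN)
  simp only [mul_one]
  rw [Pi.div_apply, cN', cD, div_right_comm, mul_div_mul_left _ _ hc0.ne']
  ring

/-! ### Reduction to the diagonal case -/

theorem quadForm_eq_dotProduct {d : ℕ} (M : Matrix (Fin d) (Fin d) ℝ)
    (x : EuclideanSpace ℝ (Fin d)) : quadForm M x = x.ofLp ⬝ᵥ (M *ᵥ x.ofLp) := by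
  simp [quadForm, dotProduct, mulVec, Finset.mul_sum, mul_assoc]

/-- Orthogonal diagonalisation of a quadratic form. -/
theorem quadForm_conj {d : ℕ} {Umat : Matrix (Fin d) (Fin d) ℝ} (hO2 : Umatᵀ * Umat = 1)
    (c : Fin d → ℝ) (y : EuclideanSpace ℝ (Fin d)) :
    quadForm (Umat * Matrix.diagonal c * Umatᵀ) (WithLp.toLp 2 (Umat *ᵥ y.ofLp)) =
      ∑ i, c i * y i ^ 2 := by
  rw [quadForm_eq_dotProduct]
  simp only [mulVec_mulVec]
  rw [mul_assoc, hO2, mul_one, ← mulVec_mulVec, dotProduct_mulVec, vecMul_mulVec, hO2]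
  simp [dotProduct, mulVec_diagonal]
  refine Finset.sum_congr rfl fun i _ => by ring

/-- The isometry of Euclidean space given by an orthogonal matrix. -/
noncomputable def orthIsometry {d : ℕ} (Umat : Matrix (Fin d) (Fin d) ℝ)
    (hO2 : Umatᵀ * Umat = 1) : EuclideanSpace ℝ (Fin d) ≃ₗᵢ[ℝ] EuclideanSpace ℝ (Fin d) :=
  LinearIsometry.toLinearIsometryEquiv
    { toLinearMap := Matrix.toEuclideanLin Umat
      norm_map' := fun y => by
        have h : ‖Matrix.toEuclideanLin Umat y‖ ^ 2 = ‖y‖ ^ 2 := by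
          have := quadForm_conj hO2 (fun _ => 1) y
          rw [diagonal_one, mul_one, mul_eq_one_comm.1 hO2] at this
          rw [EuclideanSpace.real_norm_sq_eq, EuclideanSpace.real_norm_sq_eq]
          simpa [quadForm_eq_dotProduct, dotProduct, sq] using this
        exact (sq_eq_sq₀ (norm_nonneg _) (norm_nonneg _)).1 h } rfl

theorem orthIsometry_apply {d : ℕ} (Umat : Matrix (Fin d) (Fin d) ℝ)
    (hO2 : Umatᵀ * Umat = 1) (y : EuclideanSpace ℝ (Fin d)) :
    orthIsometry Umat hO2 y = WithLp.toLp 2 (Umat *ᵥ y.ofLp) := rfl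

/-- Second-order Taylor expansion with Peano remainder at a critical point, obtained by applying
the mean value inequality to `t ↦ U (t x) - t² ⟪A x, x⟫ / 2` on `[0, 1]`; symmetry of `A` is not
needed. -/
theorem taylor_critical {E : Type*} [NormedAddCommGroup E] [InnerProductSpace ℝ E]
    [CompleteSpace E] {U : E → ℝ} (hU : Differentiable ℝ U) (hU0 : U 0 = 0)
    (hgrad0 : gradient U 0 = 0) {A : E →L[ℝ] E} (hA : HasFDerivAt (gradient U) A 0)
    {η : ℝ} (hη : 0 < η) :
    ∃ r > 0, ∀ x, ‖x‖ ≤ r → |U x - 1 / 2 * inner ℝ (A x) x| ≤ η * ‖x‖ ^ 2 := by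
  have h1 := hA.isLittleO.def hη
  simp only [hgrad0, sub_zero] at h1
  obtain ⟨r, hr, hball⟩ := Metric.eventually_nhds_iff_ball.1 h1
  refine ⟨r / 2, by positivity, fun x hx => ?_⟩
  have hd : ∀ t : ℝ, HasDerivAt (fun t : ℝ => U (t • x) - t ^ 2 / 2 * inner ℝ (A x) x)
      (inner ℝ (gradient U (t • x) - A (t • x)) x) t := fun t => by
    have e1 := (hU (t • x)).hasGradientAt.hasFDerivAt.comp_hasDerivAt t
      ((hasDerivAt_id t).smul_const x)
    have e2 := (((hasDerivAt_id t).pow 2).div_const 2).mul_const (inner ℝ (A x) x)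
    refine (e1.sub e2).congr_deriv ?_
    simp [inner_sub_left, inner_smul_left]
  have := norm_image_sub_le_of_norm_deriv_le_segment_01' (C := η * ‖x‖ ^ 2)
    (fun t _ => (hd t).hasDerivWithinAt) (fun t ht => by
      have htx : ‖t • x‖ ≤ ‖x‖ := by
        rw [norm_smul, Real.norm_eq_abs, abs_of_nonneg ht.1]
        exact mul_le_of_le_one_left (norm_nonneg _) ht.2.le
      have hb := hball (t • x) (by rw [mem_ball_zero_iff]; linarith)
      calc _ ≤ ‖gradient U (t • x) - A (t • x)‖ * ‖x‖ := norm_inner_le_norm _ _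
        _ ≤ η * ‖x‖ * ‖x‖ := by
          refine mul_le_mul_of_nonneg_right (hb.trans ?_) (norm_nonneg _)
          exact mul_le_mul_of_nonneg_left htx hη.le
        _ = _ := by ring)
  simpa [hU0] using this

/-- Identification of the Γ-limit `𝒥⁽⁰⁾` at a critical point: with `H̃` the negative
part of the Hessian `∇²U(0) = 𝕌 diag(λ) 𝕌ᵀ`, `G(x) = x·H̃x`, a cutoff `φ`, and
`√ε ≺ δ(ε) ≺ ε^{1/3}`, one has
`ε⁻¹ (∫ e^{(G−U)/ε} φ(x/δ)² (x·H̃²x) dx) / (∫ e^{(G−U)/ε} φ(x/δ)² dx)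
  → Σ_i max(−λ_i,0) = ζ(0)`. -/
theorem stmt17 {d : ℕ}
    (U : EuclideanSpace ℝ (Fin d) → ℝ) (hU : ContDiff ℝ 3 U)
    (hU0 : U 0 = 0) (hgrad0 : gradient U 0 = 0)
    (Umat : Matrix (Fin d) (Fin d) ℝ)
    (hO1 : Umat * Umatᵀ = 1) (hO2 : Umatᵀ * Umat = 1)
    (lam : Fin d → ℝ) (hlam : ∀ i, lam i ≠ 0)
    (hHess : ∀ v : EuclideanSpace ℝ (Fin d), ∀ i,
      (fderiv ℝ (gradient U) 0 v) i =
        ∑ j, (Umat * Matrix.diagonal lam * Umatᵀ) i j * v j)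
    (φ : EuclideanSpace ℝ (Fin d) → ℝ) (hφ : Continuous φ)
    (hφ01 : ∀ x, φ x ∈ Set.Icc (0:ℝ) 1)
    (hφ1 : ∀ x ∈ Metric.closedBall (0 : EuclideanSpace ℝ (Fin d)) (1/2), φ x = 1)
    (hφ0 : ∀ x ∉ Metric.closedBall (0 : EuclideanSpace ℝ (Fin d)) 1, φ x = 0)
    (δ : ℝ → ℝ) (hδpos : ∀ ε : ℝ, 0 < ε → 0 < δ ε)
    (hδ1 : Tendsto (fun ε => Real.sqrt ε / δ ε) (𝓝[>] (0:ℝ)) (𝓝 0))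
    (hδ2 : Tendsto (fun ε => (δ ε) ^ 3 / ε) (𝓝[>] (0:ℝ)) (𝓝 0)) :
    Tendsto (fun ε =>
        (1 / ε) *
          (∫ x, Real.exp ((quadForm (negPart Umat lam) x - U x) / ε) *
              (φ ((δ ε)⁻¹ • x)) ^ 2 *
              quadForm (negPart Umat lam * negPart Umat lam) x) /
          ∫ x, Real.exp ((quadForm (negPart Umat lam) x - U x) / ε) *
            (φ ((δ ε)⁻¹ • x)) ^ 2)
      (𝓝[>] (0:ℝ)) (𝓝 (∑ i, max (-(lam i)) 0)) := by
  set L := orthIsometry Umat hO2 with hL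
  have hG : ∀ y, quadForm (negPart Umat lam) (L y) = ∑ i, min (lam i) 0 * y i ^ 2 :=
    fun y => quadForm_conj hO2 _ y
  have hG2 : ∀ y, quadForm (negPart Umat lam * negPart Umat lam) (L y) =
      ∑ i, min (lam i) 0 ^ 2 * y i ^ 2 := fun y => by
    have e : negPart Umat lam * negPart Umat lam =
        Umat * Matrix.diagonal (fun i => min (lam i) 0 ^ 2) * Umatᵀ := by
      calc negPart Umat lam * negPart Umat lam
          = Umat * Matrix.diagonal (fun i => min (lam i) 0) * (Umatᵀ * Umat) *
              Matrix.diagonal (fun i => min (lam i) 0) * Umatᵀ := by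
            simp only [_root_.negPart, Matrix.mul_assoc]
        _ = _ := by
            rw [hO2, mul_one, Matrix.mul_assoc Umat, diagonal_mul_diagonal]
            simp only [sq]
    rw [e]
    exact quadForm_conj hO2 _ y
  have hUd : Differentiable ℝ U := hU.differentiable (by norm_num)
  have hgd : DifferentiableAt ℝ (gradient U) 0 := by
    have h1 : Differentiable ℝ (fderiv ℝ U) :=
      (hU.fderiv_right (m := 2) (by norm_num)).differentiable (by norm_num)
    exact (InnerProductSpace.toDual ℝ (EuclideanSpace ℝ (Fin d))).symm.toContinuousLinearEquiv
      |>.differentiableAt.comp _ (h1 0)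
  have hV : ∀ η > 0, ∃ r > 0, ∀ y, ‖y‖ ≤ r →
      |U (L y) - ∑ i, lam i / 2 * y i ^ 2| ≤ η * ‖y‖ ^ 2 := fun η hη => by
    obtain ⟨r, hr, h⟩ := taylor_critical hUd hU0 hgrad0 hgd.hasFDerivAt hη
    refine ⟨r, hr, fun y hy => ?_⟩
    have h1 := h (L y) (by rwa [L.norm_map])
    have h2 : inner ℝ (fderiv ℝ (gradient U) 0 (L y)) (L y) = ∑ i, lam i * y i ^ 2 := by
      rw [← quadForm_conj hO2 lam y, ← orthIsometry_apply Umat hO2, quadForm_eq_dotProduct]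
      simp only [PiLp.inner_apply, hHess]
      rfl
    rw [h2, Finset.mul_sum, L.norm_map] at h1
    have e : ∀ i, lam i / 2 * y i ^ 2 = 1 / 2 * (lam i * y i ^ 2) := fun i => by ring
    simpa only [e] using h1
  have key := tendsto_ratio_diag (V := fun y => U (L y)) (ψ := fun y => φ (L y))
    (hU.continuous.comp L.continuous) hlam hV (hφ.comp L.continuous) (fun x => hφ01 _)
    (fun x hx => hφ1 _ (by rwa [mem_closedBall_zero_iff, L.norm_map]))
    (fun x hx => hφ0 _ (by rwa [mem_closedBall_zero_iff, L.norm_map, not_le]))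
    hδpos hδ1 (tendsto_zero_of_cube_div hδ2)
  refine key.congr fun ε => ?_
  have hmp := L.measurePreserving
  have hme := L.toHomeomorph.measurableEmbedding
  rw [← hmp.integral_comp hme (fun x => Real.exp ((quadForm (negPart Umat lam) x - U x) / ε) *
      (φ ((δ ε)⁻¹ • x)) ^ 2 * quadForm (negPart Umat lam * negPart Umat lam) x),
    ← hmp.integral_comp hme (fun x => Real.exp ((quadForm (negPart Umat lam) x - U x) / ε) *
      (φ ((δ ε)⁻¹ • x)) ^ 2)]
  simp only [hG, hG2, map_smul]
end
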